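/- Let ρ be a binary constant-length substitution of length L ≥ 2 with Fourier matrix B(k), and suppose the polynomials Q and R are not equal. Then for Lebesgue-almost every k ∈ ℝ the matrices B(L^m k) are invertible for all m ≥ 0 and lim_{n→∞} (1/n)·log‖(B(k)·B(Lk)···B(L^{n−1}k))^{−1}‖ = 0; equivalently, the maximal Lyapunov exponent of the outward cocycle is χ_max(k) = log√L for almost every k. -/

import Mathlib

open Filter Polynomial

noncomputable section

/-- `e k = exp(2πik)`, the point on the unit circle with angle `2πk`. -/
def e (k : ℝ) : ℂ := Complex.exp (2 * Real.pi * Complex.I * k)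

/-- Coincidence positions of type `a` (letter `a` encoded as `0`, `b` as `1`). -/
def Ca {L : ℕ} (wa wb : Fin L → Fin 2) : Finset (Fin L) :=
  Finset.univ.filter fun i => wa i = 0 ∧ wb i = 0

/-- Coincidence positions of type `b`. -/
def Cb {L : ℕ} (wa wb : Fin L → Fin 2) : Finset (Fin L) :=
  Finset.univ.filter fun i => wa i = 1 ∧ wb i = 1

/-- Bijective positions where `(w_a)_i = a` and `(w_b)_i = b`. -/
def Pa {L : ℕ} (wa wb : Fin L → Fin 2) : Finset (Fin L) :=
  Finset.univ.filter fun i => wa i = 0 ∧ wb i = 1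

/-- Bijective positions where `(w_a)_i = b` and `(w_b)_i = a`. -/
def Pb {L : ℕ} (wa wb : Fin L → Fin 2) : Finset (Fin L) :=
  Finset.univ.filter fun i => wa i = 1 ∧ wb i = 0

/-- The polynomial `∑_{z ∈ S} X^z` associated with a set of positions. -/
def posPoly {L : ℕ} (S : Finset (Fin L)) : Polynomial ℂ :=
  ∑ z ∈ S, Polynomial.X ^ (z : ℕ)

/-- The Fourier matrix `B(k)` of the substitution determined by `wa, wb`. -/
def FourierB {L : ℕ} (wa wb : Fin L → Fin 2) (k : ℝ) : Matrix (Fin 2) (Fin 2) ℂ :=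
  !![(posPoly (Ca wa wb) + posPoly (Pa wa wb)).eval (e k),
     (posPoly (Ca wa wb) + posPoly (Pb wa wb)).eval (e k);
     (posPoly (Cb wa wb) + posPoly (Pb wa wb)).eval (e k),
     (posPoly (Cb wa wb) + posPoly (Pa wa wb)).eval (e k)]

/-- The logarithmic Mahler measure `m(f) = ∫₀¹ log |f(e^{2πik})| dk`. -/
def logMahler (f : Polynomial ℂ) : ℝ :=
  ∫ k in (0:ℝ)..1, Real.log (‖f.eval (e k)‖)

/-- The operator norm of a matrix, induced by the Euclidean norm on `ℂ²`. -/
def opNorm (M : Matrix (Fin 2) (Fin 2) ℂ) : ℝ :=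
  ‖Matrix.toEuclideanCLM (𝕜 := ℂ) M‖

/-- The (forward) matrix product `B(k) · B(Lk) ⋯ B(L^{n-1}k)` of the outward cocycle. -/
def cocycleProd {L : ℕ} (wa wb : Fin L → Fin 2) (k : ℝ) (n : ℕ) :
    Matrix (Fin 2) (Fin 2) ℂ :=
  (((List.range n).map fun m => FourierB wa wb ((L : ℝ) ^ m * k))).prod

/-! The vectors `(1, -1)` and `(1, 1)` form an orthogonal basis in which every `B(k)` becomes upper
triangular, with diagonal entries `Q - R` and `P₁ + P₂ + Q + R = 1 + u + ⋯ + u ^ (L - 1)`. By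
Birkhoff's ergodic theorem for `x ↦ L x` on the circle, the products of each diagonal entry along
almost every orbit grow exponentially at the rate of its logarithmic Mahler measure. The bounded
off-diagonal entries add no growth, so the exponent of the inverse products is the maximum of
`-m(Q - R)` and `-m(1 + u + ⋯ + u ^ (L - 1))`. The former is at most `0` because `Q - R` is a
nonzero integer polynomial, the latter is `0` because all the roots are roots of unity. -/

open MeasureTheory Set Topology

section Birkhoff

variable {α : Type*} {T : α → α}

lemma partialSups_birkhoffSum_succ {M : Type*} [AddCommGroup M] [Lattice M]
    [IsOrderedAddMonoid M] (T : α → α) (f : α → M) (n : ℕ) (x : α) :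
    partialSups (birkhoffSum T f) (n + 1) x =
      0 ⊔ (f x + partialSups (birkhoffSum T f) n (T x)) := by
  simp only [Pi.partialSups_apply]
  refine eq_of_forall_ge_iff fun c => ?_
  rw [sup_le_iff, ← le_sub_iff_add_le', partialSups_le_iff, partialSups_le_iff]
  refine ⟨fun h => ⟨h 0 (Nat.zero_le _), fun j hj => ?_⟩, fun h j hj => ?_⟩
  · have := h (j + 1) (by lia)
    rwa [birkhoffSum_succ', ← le_sub_iff_add_le'] at this
  · cases j with
    | zero => exact h.1
    | succ j =>
      rw [birkhoffSum_succ', ← le_sub_iff_add_le']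
      exact h.2 j (by lia)

lemma bddAbove_range_birkhoffSum_apply {M : Type*} [AddCommGroup M] [Lattice M]
    [IsOrderedAddMonoid M] {f : α → M} {x : α} :
    BddAbove (range fun n => birkhoffSum T f n (T x)) ↔
      BddAbove (range fun n => birkhoffSum T f n x) := by
  have hrange : (range fun n => birkhoffSum T f n x) =
      insert 0 (OrderIso.addLeft (f x) '' range fun n => birkhoffSum T f n (T x)) := by
    rw [← Nat.range_of_succ, ← range_comp, birkhoffSum_zero, singleton_union]
    exact congrArg _ (congrArg range (funext fun n => birkhoffSum_succ' T f n x))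
  rw [hrange, bddAbove_insert, OrderIso.bddAbove_image]

variable [MeasurableSpace α] {μ : Measure α} {f : α → ℝ}

lemma integrable_birkhoffSum (hT : MeasurePreserving T μ μ) (hf : Integrable f μ) (n : ℕ) :
    Integrable (birkhoffSum T f n) μ :=
  integrable_finsetSum _ fun k _ => (hT.iterate k).integrable_comp_of_integrable hf

lemma integrable_partialSups_birkhoffSum (hT : MeasurePreserving T μ μ) (hf : Integrable f μ)
    (n : ℕ) : Integrable (partialSups (birkhoffSum T f) n) μ := by
  induction n with
  | zero => simp
  | succ n ih =>
    rw [← Order.succ_eq_add_one, partialSups_succ]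
    exact ih.sup (integrable_birkhoffSum hT hf _)

-- With `Mₙ = max (S₀, …, Sₙ)` one has `Mₙ₊₁ - Mₙ ∘ T = max (-Mₙ ∘ T, f)`. These functions have
-- nonnegative integral because `Mₙ ≤ Mₙ₊₁`, and they converge to `f` where `Mₙ` is unbounded.
theorem integral_nonneg_of_ae_not_bddAbove_birkhoffSum (hT : MeasurePreserving T μ μ)
    (hf : Integrable f μ)
    (hunbdd : ∀ᵐ x ∂μ, ¬ BddAbove (range fun n => birkhoffSum T f n x)) :
    0 ≤ ∫ x, f x ∂μ := by
  set M : ℕ →o (α → ℝ) := partialSups (birkhoffSum T f)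
  have hM (n : ℕ) : Integrable (M n) μ := integrable_partialSups_birkhoffSum hT hf n
  have hMT (n : ℕ) : Integrable (fun x => M n (T x)) μ := hT.integrable_comp_of_integrable (hM n)
  have hM_nonneg (n : ℕ) (x : α) : 0 ≤ M n x := by
    simpa using le_partialSups_of_le (birkhoffSum T f) (Nat.zero_le n) x
  have hdiff (n : ℕ) (x : α) : M (n + 1) x - M n (T x) = max (-M n (T x)) (f x) := by
    rw [partialSups_birkhoffSum_succ, ← max_sub_sub_right, zero_sub, add_sub_cancel_right]
  have hlim : Tendsto (fun n => ∫ x, (M (n + 1) x - M n (T x)) ∂μ) atTop (𝓝 (∫ x, f x ∂μ)) := by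
    refine tendsto_integral_of_dominated_convergence (fun x => |f x|)
      (fun n => ((hM (n + 1)).sub (hMT n)).aestronglyMeasurable) hf.abs
      (fun n => .of_forall fun x => ?_) ?_
    · rw [hdiff, Real.norm_eq_abs, abs_le]
      exact ⟨le_max_of_le_right (neg_abs_le _),
        max_le (by linarith [hM_nonneg n (T x), abs_nonneg (f x)]) (le_abs_self _)⟩
    · filter_upwards [hunbdd] with x hx
      rw [← bddAbove_range_birkhoffSum_apply, not_bddAbove_iff] at hx
      obtain ⟨_, ⟨N, rfl⟩, hN⟩ := hx (-f x)
      refine tendsto_const_nhds.congr' ?_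
      filter_upwards [eventually_ge_atTop N] with n hn
      have : birkhoffSum T f N (T x) ≤ M n (T x) :=
        le_partialSups_of_le (birkhoffSum T f) hn (T x)
      rw [hdiff, max_eq_right (by linarith)]
  refine ge_of_tendsto' hlim fun n => ?_
  have hcomp : ∫ x, M n (T x) ∂μ = ∫ x, M n x ∂μ := by
    conv_rhs => rw [← hT.map_eq]
    exact (integral_map hT.aemeasurable (hT.map_eq.symm ▸ (hM n).aestronglyMeasurable)).symm
  rw [integral_sub (hM _) (hMT n), hcomp, sub_nonneg]
  exact integral_mono (hM _) (hM _) (M.monotone n.le_succ)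

lemma ae_bddAbove_range_birkhoffSum_of_integral_neg (hT : Ergodic T μ) (hfm : Measurable f)
    (hf : Integrable f μ) (hneg : ∫ x, f x ∂μ < 0) :
    ∀ᵐ x ∂μ, BddAbove (range fun n => birkhoffSum T f n x) := by
  have hmeas : MeasurableSet {x | BddAbove (range fun n => birkhoffSum T f n x)} :=
    measurableSet_bddAbove_range fun n =>
      Finset.measurable_fun_sum _ fun k _ => hfm.comp (hT.measurable.iterate k)
  have hinv : T ⁻¹' {x | BddAbove (range fun n => birkhoffSum T f n x)} =
      {x | BddAbove (range fun n => birkhoffSum T f n x)} :=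
    ext fun x => bddAbove_range_birkhoffSum_apply
  refine (hT.ae_mem_or_ae_notMem hmeas hinv).resolve_right fun hunbdd => hneg.not_ge ?_
  exact integral_nonneg_of_ae_not_bddAbove_birkhoffSum hT.toMeasurePreserving hf hunbdd

variable [IsProbabilityMeasure μ]

lemma ae_eventually_birkhoffAverage_lt (hT : Ergodic T μ) (hfm : Measurable f)
    (hf : Integrable f μ) {c : ℝ} (hc : ∫ x, f x ∂μ < c) :
    ∀ᵐ x ∂μ, ∀ᶠ n in atTop, birkhoffAverage ℝ T f n x < c := by
  obtain ⟨b, hfb, hbc⟩ := exists_between hc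
  have hneg : ∫ x, (f x - b) ∂μ < 0 := by
    simpa [integral_sub hf (integrable_const b)] using hfb
  filter_upwards [ae_bddAbove_range_birkhoffSum_of_integral_neg hT (hfm.sub_const b)
    (hf.sub (integrable_const b)) hneg] with x ⟨C, hC⟩
  have hlim : Tendsto (fun n : ℕ => C / n + b) atTop (𝓝 b) := by
    simpa using (tendsto_const_div_atTop_nhds_zero_nat C).add_const b
  filter_upwards [hlim.eventually_lt_const hbc, eventually_gt_atTop 0] with n hn hn0
  have hsum : birkhoffSum T f n x - n * b ≤ C := by
    simpa [birkhoffSum, Finset.sum_sub_distrib] using hC ⟨n, rfl⟩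
  refine lt_of_le_of_lt ?_ hn
  have : (0 : ℝ) < n := by exact_mod_cast hn0
  rw [birkhoffAverage, smul_eq_mul, div_add' _ _ _ this.ne', inv_mul_eq_div]
  gcongr
  linarith

theorem ae_tendsto_birkhoffAverage (hT : Ergodic T μ) (hf : Integrable f μ) :
    ∀ᵐ x ∂μ, Tendsto (fun n => birkhoffAverage ℝ T f n x) atTop (𝓝 (∫ x, f x ∂μ)) := by
  wlog hfm : Measurable f generalizing f
  · have hfg := hf.aestronglyMeasurable.ae_eq_mk
    have hmk := this (hf.congr hfg) hf.aestronglyMeasurable.measurable_mk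
    filter_upwards [hmk, ae_all_iff.2
      (hT.quasiMeasurePreserving.birkhoffAverage_ae_eq_of_ae_eq ℝ hfg)] with x hx heq
    rw [integral_congr_ae hfg]
    simpa only [heq] using hx
  have hupper (q : ℚ) (hq : ∫ x, f x ∂μ < q) :
      ∀ᵐ x ∂μ, ∀ᶠ n in atTop, birkhoffAverage ℝ T f n x < q :=
    ae_eventually_birkhoffAverage_lt hT hfm hf hq
  have hlower (q : ℚ) (hq : q < ∫ x, f x ∂μ) :
      ∀ᵐ x ∂μ, ∀ᶠ n in atTop, q < birkhoffAverage ℝ T f n x := by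
    have hneg : ∫ x, (-f) x ∂μ < -q := by simpa [integral_neg] using hq
    simpa [birkhoffAverage_neg] using ae_eventually_birkhoffAverage_lt hT hfm.neg hf.neg hneg
  filter_upwards [ae_all_iff.2 fun q => ae_all_iff.2 (hupper q),
    ae_all_iff.2 fun q => ae_all_iff.2 (hlower q)] with x hxu hxl
  refine tendsto_order.2 ⟨fun a ha => ?_, fun a ha => ?_⟩
  · obtain ⟨q, haq, hq⟩ := exists_rat_btwn ha
    exact (hxl q hq).mono fun n hn => haq.trans hn
  · obtain ⟨q, hq, hqa⟩ := exists_rat_btwn ha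
    exact (hxu q hq).mono fun n hn => hn.trans hqa

end Birkhoff

section GrowthRate

/-- The sequence `u` of positive reals is of the form `exp (χ n + o(n))`. For the norms of the
products of a matrix cocycle along an orbit, `χ` is the maximal Lyapunov exponent. -/
def HasGrowthRate (u : ℕ → ℝ) (χ : ℝ) : Prop :=
  Tendsto (fun n : ℕ => (1 / n : ℝ) * Real.log (u n)) atTop (𝓝 χ)

variable {u v : ℕ → ℝ} {χ ψ c : ℝ}

lemma HasGrowthRate.inv (hu : HasGrowthRate u χ) : HasGrowthRate (fun n => (u n)⁻¹) (-χ) := by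
  simpa [HasGrowthRate] using hu.neg

lemma HasGrowthRate.sup (hu : HasGrowthRate u χ) (hv : HasGrowthRate v ψ) (hu0 : ∀ n, 0 < u n)
    (hv0 : ∀ n, 0 < v n) : HasGrowthRate (fun n => max (u n) (v n)) (max χ ψ) := by
  refine (Tendsto.max hu hv).congr fun n => ?_
  rw [← mul_max_of_nonneg _ _ (by positivity),
    Real.strictMonoOn_log.monotoneOn.map_max (hu0 n) (hv0 n)]

lemma HasGrowthRate.exists_le_mul_exp (hu : HasGrowthRate u χ) (hu0 : ∀ n, 0 < u n)
    (hc : χ < c) : ∃ C > 0, ∀ n : ℕ, u n ≤ C * Real.exp (c * n) := by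
  have hbdd : IsBoundedUnder (· ≤ ·) atTop fun n : ℕ => u n / Real.exp (c * n) := by
    refine isBoundedUnder_of_eventually_le (a := 1) ?_
    filter_upwards [hu.eventually_lt_const hc, eventually_gt_atTop 0] with n hn hn0
    have hn0 : (0 : ℝ) < n := by exact_mod_cast hn0
    rw [div_le_one (Real.exp_pos _), ← Real.log_le_iff_le_exp (hu0 n), ← div_le_iff₀ hn0]
    simpa [inv_mul_eq_div] using hn.le
  obtain ⟨C, hC⟩ := hbdd.bddAbove_range
  have hC (n : ℕ) : u n / Real.exp (c * n) ≤ C := hC ⟨n, rfl⟩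
  refine ⟨C, (div_pos (hu0 0) (Real.exp_pos _)).trans_le (hC 0), fun n => ?_⟩
  rw [← div_le_iff₀ (Real.exp_pos _)]
  exact hC n

lemma HasGrowthRate.of_le_of_le_mul_exp (hu : HasGrowthRate u χ) (hu0 : ∀ n, 0 < u n)
    (huv : ∀ n, u n ≤ v n)
    (hv : ∀ c > χ, ∃ C, ∀ n : ℕ, v n ≤ C * Real.exp (c * n)) : HasGrowthRate v χ := by
  have hv0 (n : ℕ) : 0 < v n := (hu0 n).trans_le (huv n)
  refine tendsto_order.2 ⟨fun a ha => ?_, fun a ha => ?_⟩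
  · filter_upwards [hu.eventually_const_lt ha] with n hn
    refine hn.trans_le ?_
    gcongr
    exacts [hu0 n, huv n]
  · obtain ⟨c, hχc, hca⟩ := exists_between ha
    obtain ⟨C, hC⟩ := hv c hχc
    have hC0 : 0 < C := by simpa using (hv0 0).trans_le (hC 0)
    have hlim : Tendsto (fun n : ℕ => Real.log C / n + c) atTop (𝓝 c) := by
      simpa using (tendsto_const_div_atTop_nhds_zero_nat (Real.log C)).add_const c
    filter_upwards [hlim.eventually_lt_const hca, eventually_ne_atTop 0] with n hn hn0
    calc (1 / n : ℝ) * Real.log (v n) ≤ 1 / n * Real.log (C * Real.exp (c * n)) := by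
          gcongr
          exacts [hv0 n, hC n]
      _ = Real.log C / n + c := by
          rw [Real.log_mul hC0.ne' (Real.exp_ne_zero _), Real.log_exp]
          field_simp
      _ < a := hn

-- The exponent of the left-hand side is `-χ (n - j) - ψ j`, up to `3 ε n + O(1)`.
lemma HasGrowthRate.exists_inv_mul_mul_inv_le (hu : HasGrowthRate u χ) (hv : HasGrowthRate v ψ)
    (hu0 : ∀ n, 0 < u n) (hv0 : ∀ n, 0 < v n) (hc : max (-χ) (-ψ) < c) :
    ∃ C > 0, ∀ n : ℕ, ∀ j < n, (u n)⁻¹ * (u j * (v (j + 1))⁻¹) ≤ C * Real.exp (c * n) := by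
  obtain ⟨ε, hε, rfl⟩ : ∃ ε > 0, c = max (-χ) (-ψ) + 3 * ε :=
    ⟨(c - max (-χ) (-ψ)) / 3, by linarith, by ring⟩
  obtain ⟨A, hA0, hA⟩ := hu.inv.exists_le_mul_exp (fun n => inv_pos.2 (hu0 n))
    (lt_add_of_pos_right (-χ) hε)
  obtain ⟨B, hB0, hB⟩ := hu.exists_le_mul_exp hu0 (lt_add_of_pos_right χ hε)
  obtain ⟨D, hD0, hD⟩ := hv.inv.exists_le_mul_exp (fun n => inv_pos.2 (hv0 n))
    (lt_add_of_pos_right (-ψ) hε)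
  refine ⟨A * B * D * Real.exp (-ψ + ε), by positivity, fun n j hj => ?_⟩
  have hjn : (j : ℝ) ≤ n := by exact_mod_cast hj.le
  calc (u n)⁻¹ * (u j * (v (j + 1))⁻¹)
      ≤ (A * Real.exp ((-χ + ε) * n)) *
          ((B * Real.exp ((χ + ε) * j)) * (D * Real.exp ((-ψ + ε) * (j + 1 : ℕ)))) := by
        have := hu0 n; have := hu0 j; have := hv0 (j + 1)
        gcongr
        exacts [hA n, hB j, hD (j + 1)]
    _ = A * B * D * Real.exp ((-ψ + ε) + (-χ * (n - j) + -ψ * j + ε * (n + 2 * j))) := by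
        rw [show (-ψ + ε) + (-χ * (n - j) + -ψ * j + ε * (n + 2 * j)) =
          (-χ + ε) * n + (χ + ε) * j + (-ψ + ε) * (j + 1 : ℕ) by push_cast; ring]
        simp only [Real.exp_add]
        ring
    _ ≤ A * B * D * Real.exp ((-ψ + ε) + (max (-χ) (-ψ) + 3 * ε) * n) := by
        gcongr
        have h₁ := mul_le_mul_of_nonneg_right (le_max_left (-χ) (-ψ)) (sub_nonneg.2 hjn)
        have h₂ := mul_le_mul_of_nonneg_right (le_max_right (-χ) (-ψ)) j.cast_nonneg
        have h₃ := mul_le_mul_of_nonneg_left hjn hε.le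
        linarith
    _ = A * B * D * Real.exp (-ψ + ε) * Real.exp ((max (-χ) (-ψ) + 3 * ε) * n) := by
        rw [Real.exp_add, ← mul_assoc]

lemma HasGrowthRate.exists_inv_mul_sum_le_mul_exp (hu : HasGrowthRate u χ)
    (hv : HasGrowthRate v ψ) (hu0 : ∀ n, 0 < u n) (hv0 : ∀ n, 0 < v n)
    (hc : max (-χ) (-ψ) < c) :
    ∃ C, ∀ n : ℕ, (u n)⁻¹ * ∑ j ∈ Finset.range n, u j * (v (j + 1))⁻¹ ≤ C * Real.exp (c * n) := by
  obtain ⟨b, hb, hbc⟩ := exists_between hc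
  obtain ⟨C, hC0, hC⟩ := hu.exists_inv_mul_mul_inv_le hv hu0 hv0 hb
  have hn_le (n : ℕ) : (n : ℝ) ≤ (c - b)⁻¹ * Real.exp ((c - b) * n) := by
    rw [← div_eq_inv_mul, le_div_iff₀' (sub_pos.2 hbc)]
    linarith [Real.add_one_le_exp ((c - b) * n)]
  refine ⟨(c - b)⁻¹ * C, fun n => ?_⟩
  calc (u n)⁻¹ * ∑ j ∈ Finset.range n, u j * (v (j + 1))⁻¹
      ≤ n * (C * Real.exp (b * n)) := by
        rw [Finset.mul_sum]
        simpa using Finset.sum_le_card_nsmul _ _ _ fun j hj => hC n j (Finset.mem_range.1 hj)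
    _ ≤ ((c - b)⁻¹ * Real.exp ((c - b) * n)) * (C * Real.exp (b * n)) := by
        gcongr
        exact hn_le n
    _ = (c - b)⁻¹ * C * Real.exp (c * n) := by
        rw [mul_mul_mul_comm, ← Real.exp_add]
        ring_nf

end GrowthRate

section TriangularCocycle

open scoped Matrix.Norms.L2Operator

lemma inv_upperTriangular_fin_two {K : Type*} [Field K] {a b d : K} (ha : a ≠ 0) (hd : d ≠ 0) :
    !![a, b; 0, d]⁻¹ = !![a⁻¹, -(a⁻¹ * b * d⁻¹); 0, d⁻¹] := by
  refine Matrix.inv_eq_right_inv ?_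
  rw [Matrix.mul_fin_two, Matrix.one_fin_two]
  simp [ha, hd, mul_assoc]

lemma inv_prod_upperTriangular_fin_two {K : Type*} [Field K] {a b d : ℕ → K} (ha : ∀ m, a m ≠ 0)
    (hd : ∀ m, d m ≠ 0) (n : ℕ) :
    ((List.range n).map fun m => !![a m, b m; 0, d m]).prod⁻¹ =
      !![(∏ m ∈ Finset.range n, a m)⁻¹,
        -((∏ m ∈ Finset.range n, a m)⁻¹ * ∑ j ∈ Finset.range n,
          (∏ m ∈ Finset.range j, a m) * b j * (∏ m ∈ Finset.range (j + 1), d m)⁻¹);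
        0, (∏ m ∈ Finset.range n, d m)⁻¹] := by
  induction n with
  | zero => simp [← Matrix.one_fin_two]
  | succ n ih =>
    have hA : ∏ m ∈ Finset.range n, a m ≠ 0 := Finset.prod_ne_zero_iff.2 fun m _ => ha m
    rw [List.range_succ, List.map_append, List.prod_append, List.map_singleton,
      List.prod_singleton, Matrix.mul_inv_rev, ih, inv_upperTriangular_fin_two (ha n) (hd n),
      Matrix.mul_fin_two, Finset.sum_range_succ, Finset.prod_range_succ d,
      Finset.prod_range_succ a]
    simp only [mul_inv, mul_add, mul_zero, zero_mul, add_zero, zero_add]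
    congrm !![?_, ?_; 0, ?_]
    · exact mul_comm _ _
    · field_simp
      ring
    · exact mul_comm _ _

variable {𝕜 m n : Type*} [RCLike 𝕜] [Fintype m] [Fintype n] [DecidableEq n]

lemma norm_apply_le_l2_opNorm (A : Matrix m n 𝕜) (i : m) (j : n) : ‖A i j‖ ≤ ‖A‖ := by
  have h := A.l2_opNorm_mulVec (EuclideanSpace.single j 1)
  rw [PiLp.norm_single, norm_one, mul_one] at h
  refine le_trans ?_ ((PiLp.norm_apply_le _ i).trans h)
  simp

lemma l2_opNorm_single_le [DecidableEq m] (i : m) (j : n) (a : 𝕜) :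
    ‖Matrix.single i j a‖ ≤ ‖a‖ := by
  rw [Matrix.l2_opNorm_def]
  refine ContinuousLinearMap.opNorm_le_bound _ (norm_nonneg a) fun x => ?_
  have : (Matrix.toEuclideanLin (Matrix.single i j a)) x = EuclideanSpace.single i (a * x j) := by
    ext k
    simp [Matrix.single_mulVec, Function.update_apply]
  change ‖(Matrix.toEuclideanLin (Matrix.single i j a)) x‖ ≤ _
  rw [this, PiLp.norm_single, norm_mul]
  gcongr
  exact PiLp.norm_apply_le x j

lemma l2_opNorm_le_sum_norm (A : Matrix m n 𝕜) : ‖A‖ ≤ ∑ i, ∑ j, ‖A i j‖ := by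
  classical
  conv_lhs => rw [Matrix.matrix_eq_sum_single A]
  exact norm_sum_le_of_le _ fun i _ => norm_sum_le_of_le _ fun j _ => l2_opNorm_single_le i j _

theorem hasGrowthRate_norm_inv_prod_upperTriangular {a b d : ℕ → 𝕜} {α δ K : ℝ}
    (ha0 : ∀ m, a m ≠ 0) (hd0 : ∀ m, d m ≠ 0) (hb : ∀ m, ‖b m‖ ≤ K)
    (ha : HasGrowthRate (fun n => ‖∏ m ∈ Finset.range n, a m‖) α)
    (hd : HasGrowthRate (fun n => ‖∏ m ∈ Finset.range n, d m‖) δ) :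
    HasGrowthRate (fun n => ‖((List.range n).map fun m => !![a m, b m; 0, d m]).prod⁻¹‖)
      (max (-α) (-δ)) := by
  have hA0 (n : ℕ) : 0 < ‖∏ m ∈ Finset.range n, a m‖ :=
    norm_pos_iff.2 (Finset.prod_ne_zero_iff.2 fun m _ => ha0 m)
  have hD0 (n : ℕ) : 0 < ‖∏ m ∈ Finset.range n, d m‖ :=
    norm_pos_iff.2 (Finset.prod_ne_zero_iff.2 fun m _ => hd0 m)
  have hdiag := ha.inv.sup hd.inv (fun n => inv_pos.2 (hA0 n)) (fun n => inv_pos.2 (hD0 n))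
  simp only [inv_prod_upperTriangular_fin_two ha0 hd0]
  refine hdiag.of_le_of_le_mul_exp (fun n => lt_max_of_lt_left (inv_pos.2 (hA0 n)))
    (fun n => max_le ?_ ?_) fun c hc => ?_
  · rw [← norm_inv]
    exact norm_apply_le_l2_opNorm !![_, _; _, _] 0 0
  · rw [← norm_inv]
    exact norm_apply_le_l2_opNorm !![_, _; _, _] 1 1
  obtain ⟨A, -, hA⟩ := ha.inv.exists_le_mul_exp (fun n => inv_pos.2 (hA0 n))
    ((le_max_left _ _).trans_lt hc)
  obtain ⟨D, -, hD⟩ := hd.inv.exists_le_mul_exp (fun n => inv_pos.2 (hD0 n))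
    ((le_max_right _ _).trans_lt hc)
  obtain ⟨C, hC⟩ := ha.exists_inv_mul_sum_le_mul_exp hd hA0 hD0 hc
  have hK : 0 ≤ K := (norm_nonneg _).trans (hb 0)
  refine ⟨A + K * C + D, fun n => (l2_opNorm_le_sum_norm _).trans ?_⟩
  have hoff : ‖(∏ m ∈ Finset.range n, a m)⁻¹ * ∑ j ∈ Finset.range n,
      (∏ m ∈ Finset.range j, a m) * b j * (∏ m ∈ Finset.range (j + 1), d m)⁻¹‖ ≤
        K * (C * Real.exp (c * n)) := by
    refine le_trans ?_ (mul_le_mul_of_nonneg_left (hC n) hK)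
    rw [norm_mul, norm_inv, mul_left_comm K, Finset.mul_sum]
    gcongr
    refine norm_sum_le_of_le _ fun j _ => ?_
    rw [norm_mul, norm_mul, norm_inv, mul_right_comm, mul_comm K]
    gcongr
    exact hb j
  simp only [Fin.sum_univ_two, Matrix.of_apply, Matrix.cons_val', Matrix.cons_val_zero,
    Matrix.cons_val_one, Matrix.cons_val_fin_one, norm_neg, norm_zero, norm_inv]
  linarith [hA n, hD n]

end TriangularCocycle

section MahlerMeasure

lemma e_eq_toCircle (k : ℝ) : e k = AddCircle.toCircle (k : UnitAddCircle) := by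
  rw [AddCircle.toCircle_apply_mk, Circle.coe_exp, e]
  push_cast
  ring_nf

lemma e_eq_circleMap (k : ℝ) : e k = circleMap 0 1 (2 * Real.pi * k) := by
  simp [e, circleMap, mul_right_comm]

lemma norm_e (k : ℝ) : ‖e k‖ = 1 := by
  rw [e_eq_toCircle, Circle.norm_coe]

lemma e_pow_mul (L m : ℕ) (k : ℝ) :
    e ((L : ℝ) ^ m * k) = AddCircle.toCircle ((fun y : UnitAddCircle => L • y)^[m] k) := by
  rw [e_eq_toCircle, smul_iterate_apply, ← AddCircle.coe_nsmul, nsmul_eq_mul, Nat.cast_pow]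

lemma logMahler_eq_logMahlerMeasure (F : ℂ[X]) : logMahler F = F.logMahlerMeasure := by
  simp only [logMahler, e_eq_circleMap]
  rw [intervalIntegral.integral_comp_mul_left (fun x => Real.log ‖F.eval (circleMap 0 1 x)‖)
    (by positivity), logMahlerMeasure_def, Real.circleAverage_def]
  simp

lemma logMahler_eq_integral_unitAddCircle (F : ℂ[X]) :
    logMahler F = ∫ x : UnitAddCircle, Real.log ‖F.eval (x.toCircle : ℂ)‖ := by
  rw [← UnitAddCircle.intervalIntegral_preimage 0, zero_add]
  simp only [logMahler, e_eq_toCircle]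

lemma integrable_log_norm_eval_toCircle (F : ℂ[X]) :
    Integrable fun x : UnitAddCircle => Real.log ‖F.eval (x.toCircle : ℂ)‖ := by
  have := AddCircle.continuous_toCircle (T := 1)
  have hmeas : Measurable fun x : UnitAddCircle => Real.log ‖F.eval (x.toCircle : ℂ)‖ :=
    Real.measurable_log.comp (by fun_prop : Continuous _).measurable
  have hint : IntervalIntegrable (fun k => Real.log ‖F.eval (e k)‖) volume 0 1 := by
    simpa [e_eq_circleMap, Real.pi_ne_zero] using
      (intervalIntegrable_mahlerMeasure F).comp_mul_left (c := 2 * Real.pi)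
  rw [← (UnitAddCircle.measurePreserving_mk 0).integrable_comp hmeas.aestronglyMeasurable]
  rw [intervalIntegrable_iff_integrableOn_Ioc_of_le zero_le_one] at hint
  simpa [IntegrableOn, Function.comp_def, e_eq_toCircle] using hint

lemma logMahler_map_intCast_nonneg {G : ℤ[X]} (hG : G ≠ 0) :
    0 ≤ logMahler (G.map (Int.castRingHom ℂ)) := by
  rw [logMahler_eq_logMahlerMeasure, logMahlerMeasure_eq_log_MahlerMeasure]
  exact Real.log_nonneg (one_le_mahlerMeasure_of_ne_zero hG)

lemma logMahler_eq_zero_of_monic {F : ℂ[X]} (hF : F.Monic) (hroots : ∀ z ∈ F.roots, ‖z‖ ≤ 1) :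
    logMahler F = 0 := by
  rw [logMahler_eq_logMahlerMeasure, logMahlerMeasure_eq_log_leadingCoeff_add_sum_log_roots,
    hF.leadingCoeff, norm_one, Real.log_one, zero_add]
  refine Multiset.sum_eq_zero fun x hx => ?_
  obtain ⟨z, hz, rfl⟩ := Multiset.mem_map.1 hx
  exact (Real.posLog_eq_zero_iff _).2 (by simpa using hroots z hz)

lemma logMahler_geom_sum {L : ℕ} (hL : L ≠ 0) :
    logMahler (∑ i ∈ Finset.range L, X ^ i) = 0 := by
  refine logMahler_eq_zero_of_monic (monic_X.geom_sum' (by simp) hL) fun z hz => ?_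
  have hz0 : ∑ i ∈ Finset.range L, z ^ i = 0 := by
    simpa [eval_finsetSum] using (mem_roots'.1 hz).2
  have hzL : z ^ L = 1 := by
    rw [← sub_eq_zero, ← geom_sum_mul, hz0, zero_mul]
  exact (Complex.norm_eq_one_of_pow_eq_one hzL hL).le

lemma quasiMeasurePreserving_coe_addCircle (T : ℝ) [hT : Fact (0 < T)] :
    Measure.QuasiMeasurePreserving ((↑) : ℝ → AddCircle T) := by
  refine ⟨AddCircle.measurable_mk', Measure.AbsolutelyContinuous.mk fun s hs hs0 => ?_⟩
  rw [Measure.map_apply AddCircle.measurable_mk' hs, ← inter_univ (_ ⁻¹' s),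
    ← iUnion_Ioc_add_zsmul hT.out 0, inter_iUnion]
  refine measure_iUnion_null fun n => ?_
  rw [add_smul, one_smul, ← add_assoc, ← hs0]
  exact (AddCircle.add_projection_respects_measure T _ hs).symm

lemma ae_eval_toCircle_ne_zero {F : ℂ[X]} (hF : F ≠ 0) :
    ∀ᵐ x : UnitAddCircle, F.eval (x.toCircle : ℂ) ≠ 0 := by
  have hfin : {x : UnitAddCircle | F.eval (x.toCircle : ℂ) = 0}.Finite :=
    (finite_setOfPred_isRoot hF).preimage
      (Subtype.coe_injective.comp (AddCircle.injective_toCircle one_ne_zero)).injOn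
  have : NullSingletonClass (volume : Measure UnitAddCircle) := ⟨fun x => by
    rw [← Metric.closedBall_zero, AddCircle.volume_closedBall]
    simp⟩
  exact compl_mem_ae_iff.2 (hfin.measure_zero _)

variable {L : ℕ} {F : ℂ[X]}

lemma ae_forall_eval_e_pow_mul_ne_zero (hL : L ≠ 0) (hF : F ≠ 0) :
    ∀ᵐ k : ℝ, ∀ m : ℕ, F.eval (e ((L : ℝ) ^ m * k)) ≠ 0 := by
  refine ae_all_iff.2 fun m => ?_
  have hscale : Measure.QuasiMeasurePreserving fun k : ℝ => (L : ℝ) ^ m * k :=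
    Measure.quasiMeasurePreserving_smul volume (pow_ne_zero m (Nat.cast_ne_zero.2 hL))
  simp only [e_eq_toCircle]
  exact ((quasiMeasurePreserving_coe_addCircle 1).comp hscale).ae (ae_eval_toCircle_ne_zero hF)

theorem ae_hasGrowthRate_prod_eval_e (hL : 1 < L) (hF : F ≠ 0) :
    ∀ᵐ k : ℝ, HasGrowthRate (fun n => ‖∏ m ∈ Finset.range n, F.eval (e ((L : ℝ) ^ m * k))‖)
      (logMahler F) := by
  have : IsProbabilityMeasure (volume : Measure UnitAddCircle) := ⟨UnitAddCircle.measure_univ⟩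
  have hbirkhoff := ae_tendsto_birkhoffAverage (AddCircle.ergodic_nsmul hL)
    (integrable_log_norm_eval_toCircle F)
  rw [← logMahler_eq_integral_unitAddCircle] at hbirkhoff
  filter_upwards [(quasiMeasurePreserving_coe_addCircle 1).ae hbirkhoff,
    ae_forall_eval_e_pow_mul_ne_zero (zero_lt_one.trans hL).ne' hF] with k hk hne
  refine hk.congr fun n => ?_
  beta_reduce
  rw [norm_prod, Real.log_prod fun m _ => norm_ne_zero_iff.2 (hne m)]
  simp [birkhoffAverage, birkhoffSum, e_pow_mul]

end MahlerMeasure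

section Substitution

open scoped Matrix.Norms.L2Operator

lemma l2_opNorm_inv_prod_map_unitary_conj {𝕜 n : Type*} [RCLike 𝕜] [Fintype n] [DecidableEq n]
    (U : unitary (Matrix n n 𝕜)) (l : List (Matrix n n 𝕜)) :
    ‖(l.map fun A => (U : Matrix n n 𝕜) * A * star (U : Matrix n n 𝕜)).prod⁻¹‖ = ‖l.prod⁻¹‖ := by
  have hprod : (l.map fun A => (U : Matrix n n 𝕜) * A * star (U : Matrix n n 𝕜)).prod =
      U * l.prod * star (U : Matrix n n 𝕜) :=
    (map_list_prod (Unitary.conjStarAlgAut 𝕜 _ U) l).symm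
  have hstar : (star (U : Matrix n n 𝕜))⁻¹ = U :=
    Matrix.inv_eq_left_inv (Unitary.coe_mul_star_self U)
  have hU : (U : Matrix n n 𝕜)⁻¹ = star (U : Matrix n n 𝕜) :=
    Matrix.inv_eq_left_inv (Unitary.coe_star_mul_self U)
  rw [hprod, Matrix.mul_inv_rev, Matrix.mul_inv_rev, hstar, hU, ← Unitary.coe_star,
    CStarRing.norm_coe_unitary_mul, CStarRing.norm_mul_coe_unitary]

lemma inv_sqrt_two_mul_self : (√2 : ℂ)⁻¹ * (√2 : ℂ)⁻¹ = 1 / 2 := by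
  rw [← mul_inv, ← Complex.ofReal_mul, Real.mul_self_sqrt zero_le_two]
  norm_num

/-- The unitary matrix with columns `(1, -1) / √2` and `(1, 1) / √2`. The first is a common
eigenvector of all Fourier matrices, with eigenvalue `Q - R`. -/
def triangularizingUnitary : unitary (Matrix (Fin 2) (Fin 2) ℂ) :=
  ⟨(√2 : ℂ)⁻¹ • !![1, 1; -1, 1], Matrix.mem_unitaryGroup_iff.2 <| by
    ext i j
    fin_cases i <;> fin_cases j <;> norm_num [Matrix.mul_apply, inv_sqrt_two_mul_self]⟩

variable {L : ℕ} (wa wb : Fin L → Fin 2)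

lemma posPoly_eq_map_intCast (S : Finset (Fin L)) :
    posPoly S = (∑ z ∈ S, (X : ℤ[X]) ^ (z : ℕ)).map (Int.castRingHom ℂ) := by
  simp [posPoly, Polynomial.map_sum]

lemma norm_eval_posPoly_e_le (S : Finset (Fin L)) (k : ℝ) : ‖(posPoly S).eval (e k)‖ ≤ S.card := by
  rw [posPoly, eval_finsetSum]
  refine (norm_sum_le _ _).trans_eq ?_
  simp [norm_e]

lemma posPoly_sum_eq_geom_sum :
    posPoly (Ca wa wb) + posPoly (Cb wa wb) + posPoly (Pa wa wb) + posPoly (Pb wa wb) =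
      ∑ i ∈ Finset.range L, X ^ i := by
  rw [← Fin.sum_univ_eq_sum_range]
  simp only [posPoly, Ca, Cb, Pa, Pb, Finset.sum_filter, ← Finset.sum_add_distrib]
  refine Finset.sum_congr rfl fun i _ => ?_
  have ha : wa i = 0 ∨ wa i = 1 := by lia
  have hb : wb i = 0 ∨ wb i = 1 := by lia
  rcases ha with ha | ha <;> rcases hb with hb | hb <;> simp [ha, hb]

lemma logMahler_posPoly_sub_posPoly_nonneg {S T : Finset (Fin L)} (hST : posPoly S ≠ posPoly T) :
    0 ≤ logMahler (posPoly S - posPoly T) := by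
  rw [← sub_ne_zero] at hST
  rw [posPoly_eq_map_intCast, posPoly_eq_map_intCast, ← Polynomial.map_sub] at hST ⊢
  exact logMahler_map_intCast_nonneg fun h => hST (by rw [h, Polynomial.map_zero])

lemma FourierB_eq_unitary_conj (k : ℝ) :
    FourierB wa wb k = (triangularizingUnitary : Matrix (Fin 2) (Fin 2) ℂ) *
      !![(posPoly (Pa wa wb) - posPoly (Pb wa wb)).eval (e k),
          (posPoly (Ca wa wb) - posPoly (Cb wa wb)).eval (e k);
        0, (∑ i ∈ Finset.range L, X ^ i : ℂ[X]).eval (e k)] *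
      star (triangularizingUnitary : Matrix (Fin 2) (Fin 2) ℂ) := by
  have hstar : star !![(1 : ℂ), 1; -1, 1] = !![1, -1; 1, 1] := by
    rw [Matrix.star_eq_conjTranspose, Matrix.eta_fin_two (Matrix.conjTranspose _)]
    simp
  have hsmul : star (√2 : ℂ)⁻¹ = (√2 : ℂ)⁻¹ := by simp
  rw [← posPoly_sum_eq_geom_sum wa wb, FourierB, triangularizingUnitary, star_smul, hstar, hsmul,
    Matrix.smul_mul, smul_mul_smul_comm, inv_sqrt_two_mul_self, Matrix.mul_fin_two,
    Matrix.mul_fin_two, Matrix.smul_of]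
  simp only [Matrix.smul_cons, Matrix.smul_empty, smul_eq_mul, eval_add, eval_sub]
  congrm !![?_, ?_; ?_, ?_] <;> ring

lemma det_FourierB (k : ℝ) :
    (FourierB wa wb k).det = (posPoly (Pa wa wb) - posPoly (Pb wa wb)).eval (e k) *
      (∑ i ∈ Finset.range L, X ^ i : ℂ[X]).eval (e k) := by
  rw [← posPoly_sum_eq_geom_sum wa wb, FourierB, Matrix.det_fin_two_of]
  simp only [eval_add, eval_sub]
  ring

lemma opNorm_inv_cocycleProd (k : ℝ) (n : ℕ) :
    opNorm (cocycleProd wa wb k n)⁻¹ = ‖((List.range n).map fun m =>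
      !![(posPoly (Pa wa wb) - posPoly (Pb wa wb)).eval (e ((L : ℝ) ^ m * k)),
          (posPoly (Ca wa wb) - posPoly (Cb wa wb)).eval (e ((L : ℝ) ^ m * k));
        0, (∑ i ∈ Finset.range L, X ^ i : ℂ[X]).eval (e ((L : ℝ) ^ m * k))]).prod⁻¹‖ := by
  rw [← l2_opNorm_inv_prod_map_unitary_conj triangularizingUnitary, List.map_map, cocycleProd]
  simp only [FourierB_eq_unitary_conj]
  rfl

end Substitution

/-- For a binary constant-length substitution of length `L ≥ 2` with `Q ≠ R`,
for Lebesgue-a.e. `k` the matrices `B(L^m k)` are invertible for all `m ≥ 0` and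
`lim (1/n) log ‖(B(k)·B(Lk)⋯B(L^{n-1}k))⁻¹‖ = 0`; equivalently, the maximal Lyapunov exponent
of the outward cocycle is `χ_max(k) = log √L` almost everywhere. -/
theorem binary_substitution_max_Lyapunov_exponent
    (L : ℕ) (hL : 2 ≤ L) (wa wb : Fin L → Fin 2)
    (hQR : posPoly (Pa wa wb) ≠ posPoly (Pb wa wb)) :
    ∀ᵐ k : ℝ,
      (∀ m : ℕ, IsUnit (FourierB wa wb ((L : ℝ) ^ m * k))) ∧
      Tendsto (fun n : ℕ => (1 / n : ℝ) * Real.log (opNorm ((cocycleProd wa wb k n)⁻¹)))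
        atTop (nhds 0) := by
  have hL0 : L ≠ 0 := by lia
  have hS : posPoly (Pa wa wb) - posPoly (Pb wa wb) ≠ 0 := sub_ne_zero.2 hQR
  have hgeom : (∑ i ∈ Finset.range L, X ^ i : ℂ[X]) ≠ 0 := (monic_X.geom_sum' (by simp) hL0).ne_zero
  filter_upwards [ae_forall_eval_e_pow_mul_ne_zero hL0 hS,
    ae_forall_eval_e_pow_mul_ne_zero hL0 hgeom, ae_hasGrowthRate_prod_eval_e hL hS,
    ae_hasGrowthRate_prod_eval_e hL hgeom] with k hS0 hgeom0 hSrate hgeomrate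
  refine ⟨fun m => ?_, ?_⟩
  · rw [Matrix.isUnit_iff_isUnit_det, det_FourierB, isUnit_iff_ne_zero]
    exact mul_ne_zero (hS0 m) (hgeom0 m)
  have hoff (m : ℕ) : ‖(posPoly (Ca wa wb) - posPoly (Cb wa wb)).eval (e ((L : ℝ) ^ m * k))‖ ≤
      (Ca wa wb).card + (Cb wa wb).card := by
    rw [eval_sub]
    exact norm_sub_le_of_le (norm_eval_posPoly_e_le _ _) (norm_eval_posPoly_e_le _ _)
  have hrate := hasGrowthRate_norm_inv_prod_upperTriangular hS0 hgeom0 hoff hSrate hgeomrate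
  rw [logMahler_geom_sum hL0, neg_zero,
    max_eq_right (neg_nonpos.2 (logMahler_posPoly_sub_posPoly_nonneg hQR))] at hrate
  simpa only [HasGrowthRate, opNorm_inv_cocycleProd] using hrate
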